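/- (Edges join dual atoms) Let P be any named GS4 derivation with conclusion ⊢Γ. Then all edges in the branch-labeled axiom graph ⟨⟨P⟩⟩ link dual atom occurrences: for all edges xy ∈ E_{⟨⟨P⟩⟩}, Γ[x] = Γ[y]‾. -/

import Mathlib

open scoped Classical

noncomputable section

namespace GS4

/-- Named classical propositional formulas over atoms `α`, with names in `ℕ`. -/
inductive NForm (α : Type) : Type
  | atom : ℕ → α → NForm α
  | or   : NForm α → NForm α → NForm α
  | and  : NForm α → NForm α → NForm α

variable {α : Type}

/-- Name-preserving De Morgan negation, w.r.t. an involution `bar` on atoms. -/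
def negF (bar : α → α) : NForm α → NForm α
  | .atom x a => .atom x (bar a)
  | .or A B => .and (negF bar A) (negF bar B)
  | .and A B => .or (negF bar A) (negF bar B)

/-- The set of names occurring in a named formula. -/
def NForm.names : NForm α → Set ℕ
  | .atom x _ => {x}
  | .or A B => A.names ∪ B.names
  | .and A B => A.names ∪ B.names

/-- A named formula is sharing-free if every name occurs at most once in it. -/
def NForm.sharingFree : NForm α → Prop
  | .atom _ _ => True
  | .or A B => A.sharingFree ∧ B.sharingFree ∧ Disjoint A.names B.names
  | .and A B => A.sharingFree ∧ B.sharingFree ∧ Disjoint A.names B.names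

def NForm.isAtom : NForm α → Prop
  | .atom _ _ => True
  | _ => False

/-- Anonymous formulas (shapes): `A ≡ B` iff their shapes coincide. -/
inductive Shape (α : Type) : Type
  | atom : α → Shape α
  | or   : Shape α → Shape α → Shape α
  | and  : Shape α → Shape α → Shape α

def NForm.shape : NForm α → Shape α
  | .atom _ a => .atom a
  | .or A B => .or A.shape B.shape
  | .and A B => .and A.shape B.shape

/-- `HasAtom A x a`: the atomic formula `x:a` occurs in `A`. -/
def HasAtom : NForm α → ℕ → α → Prop
  | .atom y b, x, a => y = x ∧ b = a
  | .or A B, x, a => HasAtom A x a ∨ HasAtom B x a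
  | .and A B, x, a => HasAtom A x a ∨ HasAtom B x a

/-- Names of a finite set of named formulas. -/
def snames (Γ : Finset (NForm α)) : Set ℕ := ⋃ A ∈ Γ, A.names

/-- A finite set of named formulas is sharing-free if all its elements are
sharing-free with pairwise disjoint name sets. -/
def SFSet (Γ : Finset (NForm α)) : Prop :=
  (∀ A ∈ Γ, A.sharingFree) ∧
  ∀ A ∈ Γ, ∀ B ∈ Γ, A ≠ B → Disjoint A.names B.names

/-- `x:a` occurs in some formula of `Γ` (i.e. `Γ[x] = a` for sharing-free `Γ`). -/
def HasAtomS (Γ : Finset (NForm α)) (x : ℕ) (a : α) : Prop :=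
  ∃ A ∈ Γ, HasAtom A x a

/-- Branch sets of named formulas. -/
def BrF : NForm α → Set (Set ℕ)
  | .atom x _ => {{x}}
  | .or A B => {X | ∃ Y ∈ BrF A, ∃ Z ∈ BrF B, X = Y ∪ Z}
  | .and A B => BrF A ∪ BrF B

/-- Branch sets of sequents (finite sharing-free sets of named formulas). -/
def BrS (Γ : Finset (NForm α)) : Set (Set ℕ) :=
  {X | X ⊆ snames Γ ∧ ∀ A ∈ Γ, X ∩ A.names ∈ BrF A}

/-! ## Branch-labeled name graphs -/

/-- A branch-labeled name graph: vertices and a relation between unordered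
pairs of vertices and branch labels. -/
structure BLGraph : Type where
  verts : Set ℕ
  rel : Sym2 ℕ → Set ℕ → Prop

/-- Well-formedness of a bl-graph: related pairs consist of distinct vertices,
labels are sets of vertices, and each edge is included in its labels. -/
def BLGraph.IsBL (G : BLGraph) : Prop :=
  ∀ e X, G.rel e X → ¬ e.IsDiag ∧ X ⊆ G.verts ∧ ∀ v ∈ e, v ∈ X

def BLGraph.Edges (G : BLGraph) : Set (Sym2 ℕ) := {e | ∃ X, G.rel e X}

def BLGraph.Br (G : BLGraph) : Set (Set ℕ) := {X | ∃ e, G.rel e X}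

def BLGraph.union (G H : BLGraph) : BLGraph :=
  ⟨G.verts ∪ H.verts, fun e X => G.rel e X ∨ H.rel e X⟩

/-- Restriction `G↾_S` of a bl-graph. -/
def BLGraph.restrict (G : BLGraph) (S : Set ℕ) : BLGraph :=
  ⟨G.verts ∩ S, fun e X => G.rel e X ∧ X ⊆ S⟩

/-- The interface-relativized edge-branch relation `e ⊰^I_G X`. -/
def BLGraph.relI (G : BLGraph) (I : Set ℕ) (e : Sym2 ℕ) (X : Set ℕ) : Prop :=
  ∃ Y, G.rel e Y ∧ X = Y \ I

/-- `z 0, …, z (n-1)` is an `X`-labeled alternating path between `G` and `H`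
through the interface `I`. -/
def AltPath (G H : BLGraph) (I X : Set ℕ) (n : ℕ) (z : ℕ → ℕ) : Prop :=
  1 < n ∧
  (∀ i < n, ∀ j < n, z i = z j → i = j) ∧
  (∀ i, 0 < i → i + 1 < n → z i ∈ I) ∧
  ((∀ i, i + 1 < n →
      (Even i → G.relI I s(z i, z (i + 1)) X) ∧ (¬ Even i → H.relI I s(z i, z (i + 1)) X)) ∨
   (∀ i, i + 1 < n →
      (Even i → H.relI I s(z i, z (i + 1)) X) ∧ (¬ Even i → G.relI I s(z i, z (i + 1)) X)))

/-- Composition of bl-graphs over an interface `I`. -/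
def BLGraph.comp (G H : BLGraph) (I : Set ℕ) : BLGraph :=
  ⟨(G.verts ∪ H.verts) \ I,
   fun e X => ∃ n z, AltPath G H I X n z ∧ z 0 ∉ I ∧ z (n - 1) ∉ I ∧
     e = s(z 0, z (n - 1))⟩

/-- The weakening operator on bl-graphs: add vertices `V` and extend every
branch label by a member of `Brs`. -/
def blwk (V : Set ℕ) (Brs : Set (Set ℕ)) (G : BLGraph) : BLGraph :=
  ⟨G.verts ∪ V, fun e X => ∃ Y Z, G.rel e Y ∧ Z ∈ Brs ∧ X = Y ∪ Z⟩

/-- The bl-identity graph `id_{A,C}` on a pair of dual formulas. -/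
def blid : NForm α → NForm α → BLGraph
  | .atom x _, .atom y _ => ⟨{x, y}, fun e X => e = s(x, y) ∧ X = {x, y}⟩
  | .or A1 A2, .and C1 C2 =>
      (blwk A2.names (BrF A2) (blid A1 C1)).union (blwk A1.names (BrF A1) (blid A2 C2))
  | .and A1 A2, .or C1 C2 =>
      (blwk C2.names (BrF C2) (blid A1 C1)).union (blwk C1.names (BrF C1) (blid A2 C2))
  | _, _ => ⟨∅, fun _ _ => False⟩

/-! ## Simple name graphs -/

/-- A simple name graph. -/
structure NGraph : Type where
  verts : Set ℕ
  edges : Set (Sym2 ℕ)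

/-- Subgraph relation `H ⊑ G`. -/
def NGraph.Sub (H G : NGraph) : Prop := H.verts ⊆ G.verts ∧ H.edges ⊆ G.edges

def NGraph.union (G H : NGraph) : NGraph := ⟨G.verts ∪ H.verts, G.edges ∪ H.edges⟩

/-- Induced subgraph `G↾_S`. -/
def NGraph.restrict (G : NGraph) (S : Set ℕ) : NGraph :=
  ⟨G.verts ∩ S, {e ∈ G.edges | ∀ v ∈ e, v ∈ S}⟩

/-- Alternating paths between simple name graphs through an interface. -/
def NAltPath (G H : NGraph) (I : Set ℕ) (n : ℕ) (z : ℕ → ℕ) : Prop :=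
  0 < n ∧
  (∀ i < n, ∀ j < n, z i = z j → i = j) ∧
  (∀ i, 0 < i → i + 1 < n → z i ∈ I) ∧
  ((∀ i, i + 1 < n →
      (Even i → s(z i, z (i + 1)) ∈ G.edges) ∧ (¬ Even i → s(z i, z (i + 1)) ∈ H.edges)) ∨
   (∀ i, i + 1 < n →
      (Even i → s(z i, z (i + 1)) ∈ H.edges) ∧ (¬ Even i → s(z i, z (i + 1)) ∈ G.edges)))

/-- Composition of simple name graphs over an interface. -/
def NGraph.comp (G H : NGraph) (I : Set ℕ) : NGraph :=
  ⟨(G.verts ∪ H.verts) \ I,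
   {e | ∃ x y, x ≠ y ∧ x ∈ (G.verts ∪ H.verts) \ I ∧ y ∈ (G.verts ∪ H.verts) \ I ∧
        e = s(x, y) ∧ ∃ n z, NAltPath G H I n z ∧ z 0 = x ∧ z (n - 1) = y}⟩

/-- The identity graph `Id_{A,C}` on a pair of dual formulas. -/
def idg : NForm α → NForm α → NGraph
  | .atom x _, .atom y _ => ⟨{x, y}, {s(x, y)}⟩
  | .or A1 A2, .and C1 C2 => (idg A1 C1).union (idg A2 C2)
  | .and A1 A2, .or C1 C2 => (idg A1 C1).union (idg A2 C2)
  | _, _ => ⟨∅, ∅⟩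

/-- The edgeless (weakening) graph on the names of `Γ`. -/
def wkg (Γ : Finset (NForm α)) : NGraph := ⟨snames Γ, ∅⟩

/-! ## Named GS4 derivations -/

/-- Named GS4 derivation trees. -/
inductive Deriv (α : Type) : Type
  | ax (Γ : Finset (NForm α)) (A C : NForm α)
  | cut (A : NForm α) (P Q : Deriv α)
  | sup (P Q : Deriv α)
  | orI (A B : NForm α) (P : Deriv α)
  | andI (A B : NForm α) (P Q : Deriv α)

/-- Conclusion of a derivation tree. -/
def concl : Deriv α → Finset (NForm α)
  | .ax Γ A C => insert A (insert C Γ)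
  | .cut A P _ => (concl P).erase A
  | .sup P _ => concl P
  | .orI A B P => insert (NForm.or A B) (((concl P).erase A).erase B)
  | .andI A B P _ => insert (NForm.and A B) ((concl P).erase A)

/-- Well-formedness of derivation trees w.r.t. the atom involution `bar`:
each rule is applied correctly to sharing-free named sequents. -/
def WF (bar : α → α) : Deriv α → Prop
  | .ax Γ A C =>
      A.shape = (negF bar C).shape ∧
      A.sharingFree ∧ C.sharingFree ∧ SFSet Γ ∧
      Disjoint A.names C.names ∧
      Disjoint A.names (snames Γ) ∧ Disjoint C.names (snames Γ)
  | .cut A P Q =>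
      WF bar P ∧ WF bar Q ∧
      ∃ Γ : Finset (NForm α), A ∉ Γ ∧ negF bar A ∉ Γ ∧
        concl P = insert A Γ ∧ concl Q = insert (negF bar A) Γ ∧
        A.sharingFree ∧ SFSet Γ ∧ Disjoint A.names (snames Γ)
  | .sup P Q => WF bar P ∧ WF bar Q ∧ concl P = concl Q
  | .orI A B P =>
      WF bar P ∧
      ∃ Γ : Finset (NForm α), A ∉ Γ ∧ B ∉ Γ ∧ A ≠ B ∧
        concl P = insert A (insert B Γ) ∧
        A.sharingFree ∧ B.sharingFree ∧ SFSet Γ ∧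
        Disjoint A.names B.names ∧
        Disjoint A.names (snames Γ) ∧ Disjoint B.names (snames Γ)
  | .andI A B P Q =>
      WF bar P ∧ WF bar Q ∧
      ∃ Γ : Finset (NForm α), A ∉ Γ ∧ B ∉ Γ ∧
        concl P = insert A Γ ∧ concl Q = insert B Γ ∧
        A.sharingFree ∧ B.sharingFree ∧ SFSet Γ ∧
        Disjoint A.names B.names ∧
        Disjoint A.names (snames Γ) ∧ Disjoint B.names (snames Γ)

/-- A derivation is cut-free if it contains no cut rule. -/
def CutFree : Deriv α → Prop
  | .ax _ _ _ => True
  | .cut _ _ _ => False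
  | .sup P Q => CutFree P ∧ CutFree Q
  | .orI _ _ P => CutFree P
  | .andI _ _ P Q => CutFree P ∧ CutFree Q

/-- The branch-labeled axiom graph `⟨⟨P⟩⟩` of a derivation. -/
def blaxg : Deriv α → BLGraph
  | .ax Γ A C => blwk (snames Γ) (BrS Γ) (blid A C)
  | .cut A P Q => BLGraph.comp (blaxg P) (blaxg Q) A.names
  | .sup P Q => (blaxg P).union (blaxg Q)
  | .orI _ _ P => blaxg P
  | .andI _ _ P Q => (blaxg P).union (blaxg Q)

/-- The (simple) axiom graph `⟦P⟧` of a derivation. -/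
def axg : Deriv α → NGraph
  | .ax Γ A C => (wkg Γ).union (idg A C)
  | .cut A P Q => NGraph.comp (axg P) (axg Q) A.names
  | .sup P Q => (axg P).union (axg Q)
  | .orI _ _ P => axg P
  | .andI _ _ P Q => (axg P).union (axg Q)

/-! ## Inversion and isolation -/

/-- Inversion of a disjunction `D ∨ E` in the conclusion. -/
def inv (D E : NForm α) : Deriv α → Deriv α
  | .ax Γ A C =>
      if A = NForm.or D E then
        match C with
        | .and C1 C2 =>
            .andI C1 C2 (.ax (insert E Γ) D C1) (.ax (insert D Γ) E C2)
        | _ => .ax Γ A C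
      else if C = NForm.or D E then
        match A with
        | .and A1 A2 =>
            .andI A1 A2 (.ax (insert E Γ) A1 D) (.ax (insert D Γ) A2 E)
        | _ => .ax Γ A C
      else
        .ax (insert D (insert E (Γ.erase (NForm.or D E)))) A C
  | .cut A P Q => .cut A (inv D E P) (inv D E Q)
  | .sup P Q => .sup (inv D E P) (inv D E Q)
  | .orI A B P => if A = D ∧ B = E then P else .orI A B (inv D E P)
  | .andI A B P Q => .andI A B (inv D E P) (inv D E Q)

/-- Left inversion of a conjunction `D ∧ E` in the conclusion. -/
def invl (D E : NForm α) : Deriv α → Deriv α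
  | .ax Γ A C =>
      if A = NForm.and D E then
        match C with
        | .or C1 C2 => .orI C1 C2 (.ax (insert C2 Γ) D C1)
        | _ => .ax Γ A C
      else if C = NForm.and D E then
        match A with
        | .or A1 A2 => .orI A1 A2 (.ax (insert A2 Γ) A1 D)
        | _ => .ax Γ A C
      else
        .ax (insert D (Γ.erase (NForm.and D E))) A C
  | .cut A P Q => .cut A (invl D E P) (invl D E Q)
  | .sup P Q => .sup (invl D E P) (invl D E Q)
  | .orI A B P => .orI A B (invl D E P)
  | .andI A B P Q => if A = D ∧ B = E then P else .andI A B (invl D E P) (invl D E Q)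

/-- Right inversion of a conjunction `D ∧ E` in the conclusion. -/
def invr (D E : NForm α) : Deriv α → Deriv α
  | .ax Γ A C =>
      if A = NForm.and D E then
        match C with
        | .or C1 C2 => .orI C1 C2 (.ax (insert C1 Γ) E C2)
        | _ => .ax Γ A C
      else if C = NForm.and D E then
        match A with
        | .or A1 A2 => .orI A1 A2 (.ax (insert A1 Γ) A2 E)
        | _ => .ax Γ A C
      else
        .ax (insert E (Γ.erase (NForm.and D E))) A C
  | .cut A P Q => .cut A (invr D E P) (invr D E Q)
  | .sup P Q => .sup (invr D E P) (invr D E Q)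
  | .orI A B P => .orI A B (invr D E P)
  | .andI A B P Q => if A = D ∧ B = E then Q else .andI A B (invr D E P) (invr D E Q)

/-- Isolation of a non-atomic formula in the conclusion. -/
def isl : NForm α → Deriv α → Deriv α
  | .or A B, P => .orI A B (inv A B P)
  | .and A B, P => .andI A B (invl A B P) (invr A B P)
  | .atom _ _, P => P

/-- Totality of a bl-graph w.r.t. a sharing-free named sequent. -/
def Total (bar : α → α) (G : BLGraph) (Γ : Finset (NForm α)) : Prop :=
  G.verts = snames Γ ∧
  G.Br = BrS Γ ∧
  ∀ x y : ℕ, s(x, y) ∈ G.Edges →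
    ∀ a b : α, HasAtomS Γ x a → HasAtomS Γ y b → a = bar b

end GS4

namespace GS4

variable {α : Type}

/-- Every edge of `G` joins two occurrences of dual atoms in `Γ`. -/
def EdgesDual (bar : α → α) (G : BLGraph) (Γ : Finset (NForm α)) : Prop :=
  ∀ e X, G.rel e X → ∃ x y a, e = s(x, y) ∧ HasAtomS Γ x a ∧ HasAtomS Γ y (bar a)

theorem HasAtom.mem_names {A : NForm α} {x : ℕ} {a : α} (h : HasAtom A x a) : x ∈ A.names := by
  induction A with
  | atom y b => exact h.1.symm
  | or A B ihA ihB => exact h.imp ihA ihB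
  | and A B ihA ihB => exact h.imp ihA ihB

theorem HasAtomS.mem_snames {Γ : Finset (NForm α)} {x : ℕ} {a : α} (h : HasAtomS Γ x a) :
    x ∈ snames Γ := by
  obtain ⟨A, hA, hx⟩ := h
  exact Set.mem_biUnion hA hx.mem_names

theorem HasAtom.unique {A : NForm α} (hA : A.sharingFree) {x : ℕ} {a b : α}
    (ha : HasAtom A x a) (hb : HasAtom A x b) : a = b := by
  induction A with
  | atom y c => exact ha.2.symm.trans hb.2
  | or A B ihA ihB | and A B ihA ihB =>
    obtain ⟨hA, hB, hd⟩ := hA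
    rcases ha with ha | ha <;> rcases hb with hb | hb
    · exact ihA hA ha hb
    · exact (Set.disjoint_left.1 hd ha.mem_names hb.mem_names).elim
    · exact (Set.disjoint_left.1 hd hb.mem_names ha.mem_names).elim
    · exact ihB hB ha hb

theorem HasAtomS.unique {Γ : Finset (NForm α)} (hΓ : SFSet Γ) {x : ℕ} {a b : α}
    (ha : HasAtomS Γ x a) (hb : HasAtomS Γ x b) : a = b := by
  obtain ⟨A, hA, ha⟩ := ha
  obtain ⟨B, hB, hb⟩ := hb
  by_cases hAB : A = B
  · subst hAB
    exact ha.unique (hΓ.1 A hA) hb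
  · exact (Set.disjoint_left.1 (hΓ.2 A hA B hB hAB) ha.mem_names hb.mem_names).elim

theorem hasAtomS_insert {Γ : Finset (NForm α)} {A : NForm α} {x : ℕ} {a : α} :
    HasAtomS (insert A Γ) x a ↔ HasAtom A x a ∨ HasAtomS Γ x a := by
  simp [HasAtomS]

theorem snames_insert (A : NForm α) (Γ : Finset (NForm α)) :
    snames (insert A Γ) = A.names ∪ snames Γ := by
  simp [snames]

theorem SFSet.insert {Γ : Finset (NForm α)} (hΓ : SFSet Γ) {A : NForm α} (hA : A.sharingFree)
    (hd : Disjoint A.names (snames Γ)) : SFSet (insert A Γ) := by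
  have hdisj : ∀ B ∈ Γ, Disjoint A.names B.names := fun B hB =>
    hd.mono_right (Set.subset_biUnion_of_mem (u := fun B : NForm α => B.names) hB)
  refine ⟨fun B hB => ?_, fun B hB C hC hBC => ?_⟩
  · rcases Finset.mem_insert.1 hB with rfl | hB
    · exact hA
    · exact hΓ.1 B hB
  · rw [Finset.mem_insert] at hB hC
    rcases hB with rfl | hB <;> rcases hC with rfl | hC
    · exact (hBC rfl).elim
    · exact hdisj C hC
    · exact (hdisj B hB).symm
    · exact hΓ.2 B hB C hC hBC

theorem names_negF (bar : α → α) (A : NForm α) : (negF bar A).names = A.names := by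
  induction A <;> simp_all [negF, NForm.names]

theorem hasAtom_negF {bar : α → α} {A : NForm α} {x : ℕ} {a : α} (h : HasAtom A x a) :
    HasAtom (negF bar A) x (bar a) := by
  induction A with
  | atom y b => exact ⟨h.1, congrArg bar h.2⟩
  | or A B ihA ihB => exact h.imp ihA ihB
  | and A B ihA ihB => exact h.imp ihA ihB

theorem negF_negF {bar : α → α} (hbar : Function.Involutive bar) (A : NForm α) :
    negF bar (negF bar A) = A := by
  induction A <;> simp_all [negF, hbar _]

theorem sharingFree_negF (bar : α → α) {A : NForm α} (h : A.sharingFree) :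
    (negF bar A).sharingFree := by
  induction A with
  | atom => trivial
  | or A B ihA ihB | and A B ihA ihB =>
    exact ⟨ihA h.1, ihB h.2.1, by simpa only [names_negF] using h.2.2⟩

theorem concl_cut {A : NForm α} {P Q : Deriv α} {Γ : Finset (NForm α)} (hA : A ∉ Γ)
    (hP : concl P = insert A Γ) : concl (.cut A P Q) = Γ := by
  rw [concl, hP, Finset.erase_insert hA]

theorem concl_orI {A B : NForm α} {P : Deriv α} {Γ : Finset (NForm α)} (hA : A ∉ Γ)
    (hB : B ∉ Γ) (hAB : A ≠ B) (hP : concl P = insert A (insert B Γ)) :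
    concl (.orI A B P) = insert (.or A B) Γ := by
  rw [concl, hP, Finset.erase_insert (by simp [hA, hAB]), Finset.erase_insert hB]

theorem concl_andI {A B : NForm α} {P Q : Deriv α} {Γ : Finset (NForm α)} (hA : A ∉ Γ)
    (hP : concl P = insert A Γ) : concl (.andI A B P Q) = insert (.and A B) Γ := by
  rw [concl, hP, Finset.erase_insert hA]

theorem WF.sfset_concl {bar : α → α} {P : Deriv α} (hP : WF bar P) : SFSet (concl P) := by
  induction P with
  | ax Γ A C =>
    obtain ⟨-, hA, hC, hΓ, hAC, hAΓ, hCΓ⟩ := hP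
    refine (hΓ.insert hC hCΓ).insert hA ?_
    rw [snames_insert]
    exact Set.disjoint_union_right.2 ⟨hAC, hAΓ⟩
  | cut A P Q =>
    obtain ⟨-, -, Γ, hA, -, hP, -, -, hΓ, -⟩ := hP
    rwa [concl_cut hA hP]
  | sup P Q ihP => exact ihP hP.1
  | orI A B P =>
    obtain ⟨-, Γ, hA, hB, hAB, hP, sA, sB, hΓ, dAB, dA, dB⟩ := hP
    rw [concl_orI hA hB hAB hP]
    exact hΓ.insert ⟨sA, sB, dAB⟩ (Set.disjoint_union_left.2 ⟨dA, dB⟩)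
  | andI A B P Q =>
    obtain ⟨-, -, Γ, hA, -, hP, -, sA, sB, hΓ, dAB, dA, dB⟩ := hP
    rw [concl_andI hA hP]
    exact hΓ.insert ⟨sA, sB, dAB⟩ (Set.disjoint_union_left.2 ⟨dA, dB⟩)

theorem blid_rel {bar : α → α} (hbar : Function.Involutive bar) {A C : NForm α}
    (h : A.shape = (negF bar C).shape) {e : Sym2 ℕ} {X : Set ℕ} (he : (blid A C).rel e X) :
    ∃ x y a, e = s(x, y) ∧ HasAtom A x a ∧ HasAtom C y (bar a) := by
  induction A generalizing C X with
  | atom x a =>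
    cases C with
    | atom y b =>
      simp only [NForm.shape, negF, Shape.atom.injEq] at h
      exact ⟨x, y, a, he.1, ⟨rfl, rfl⟩, rfl, by rw [h, hbar]⟩
    | or | and => exact he.elim
  | or A₁ A₂ ih₁ ih₂ =>
    cases C with
    | and C₁ C₂ =>
      simp only [NForm.shape, negF, Shape.or.injEq] at h
      rcases he with ⟨Y, -, he, -⟩ | ⟨Y, -, he, -⟩
      · obtain ⟨x, y, a, rfl, hx, hy⟩ := ih₁ h.1 he
        exact ⟨x, y, a, rfl, .inl hx, .inl hy⟩
      · obtain ⟨x, y, a, rfl, hx, hy⟩ := ih₂ h.2 he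
        exact ⟨x, y, a, rfl, .inr hx, .inr hy⟩
    | or | atom => exact he.elim
  | and A₁ A₂ ih₁ ih₂ =>
    cases C with
    | or C₁ C₂ =>
      simp only [NForm.shape, negF, Shape.and.injEq] at h
      rcases he with ⟨Y, -, he, -⟩ | ⟨Y, -, he, -⟩
      · obtain ⟨x, y, a, rfl, hx, hy⟩ := ih₁ h.1 he
        exact ⟨x, y, a, rfl, .inl hx, .inl hy⟩
      · obtain ⟨x, y, a, rfl, hx, hy⟩ := ih₂ h.2 he
        exact ⟨x, y, a, rfl, .inr hx, .inr hy⟩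
    | and | atom => exact he.elim

theorem EdgesDual.mono {bar : α → α} {G : BLGraph} {Γ Δ : Finset (NForm α)}
    (h : EdgesDual bar G Γ) (hΓΔ : ∀ x a, HasAtomS Γ x a → HasAtomS Δ x a) :
    EdgesDual bar G Δ := by
  intro e X he
  obtain ⟨x, y, a, rfl, hx, hy⟩ := h e X he
  exact ⟨x, y, a, rfl, hΓΔ _ _ hx, hΓΔ _ _ hy⟩

theorem EdgesDual.union {bar : α → α} {G H : BLGraph} {Γ : Finset (NForm α)}
    (hG : EdgesDual bar G Γ) (hH : EdgesDual bar H Γ) : EdgesDual bar (G.union H) Γ :=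
  fun e X he => he.elim (hG e X) (hH e X)

theorem EdgesDual.exists_of_rel {bar : α → α} (hbar : Function.Involutive bar) {G : BLGraph}
    {Γ : Finset (NForm α)} (h : EdgesDual bar G Γ) {x y : ℕ} {X : Set ℕ}
    (he : G.rel s(x, y) X) : ∃ a, HasAtomS Γ x a ∧ HasAtomS Γ y (bar a) := by
  obtain ⟨u, v, a, huv, hu, hv⟩ := h _ X he
  rcases Sym2.eq_iff.1 huv with ⟨rfl, rfl⟩ | ⟨rfl, rfl⟩
  · exact ⟨a, hu, hv⟩
  · exact ⟨bar a, hv, by rwa [hbar]⟩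

theorem EdgesDual.hasAtomS_of_rel {bar : α → α} (hbar : Function.Involutive bar) {G : BLGraph}
    {Γ : Finset (NForm α)} (hΓ : SFSet Γ) (h : EdgesDual bar G Γ) {x y : ℕ} {X : Set ℕ} {a : α}
    (he : G.rel s(x, y) X) (hx : HasAtomS Γ x a) : HasAtomS Γ y (bar a) := by
  obtain ⟨b, hb, hy⟩ := h.exists_of_rel hbar he
  rwa [hx.unique hΓ hb]

/-- Crossing the interface of a cut dualizes the atom of a name. -/
theorem hasAtomS_insert_negF {bar : α → α} {Γ : Finset (NForm α)} {A : NForm α}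
    (hd : Disjoint A.names (snames Γ)) {x : ℕ} (hx : x ∈ A.names) {a : α}
    (h : HasAtomS (insert A Γ) x a) : HasAtomS (insert (negF bar A) Γ) x (bar a) := by
  rcases hasAtomS_insert.1 h with h | h
  · exact hasAtomS_insert.2 (.inl (hasAtom_negF h))
  · exact (Set.disjoint_left.1 hd hx h.mem_snames).elim

theorem hasAtomS_of_insert {Γ : Finset (NForm α)} {A : NForm α} {x : ℕ} (hx : x ∉ A.names)
    {a : α} (h : HasAtomS (insert A Γ) x a) : HasAtomS Γ x a :=
  (hasAtomS_insert.1 h).resolve_left fun h => hx h.mem_names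

/-- The endpoints of a complete alternating path starting in `G` carry dual atoms. -/
theorem EdgesDual.alternating_path {bar : α → α} (hbar : Function.Involutive bar)
    {G H : BLGraph} {Γ : Finset (NForm α)} {A : NForm α} (hΓ : SFSet Γ) (hA : A.sharingFree)
    (hd : Disjoint A.names (snames Γ)) (hG : EdgesDual bar G (insert A Γ))
    (hH : EdgesDual bar H (insert (negF bar A) Γ)) {X : Set ℕ} {n : ℕ} {z : ℕ → ℕ}
    (hn : 1 < n) (hint : ∀ i, 0 < i → i + 1 < n → z i ∈ A.names)
    (hpath : ∀ i, i + 1 < n → (Even i → G.relI A.names s(z i, z (i + 1)) X) ∧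
      (¬ Even i → H.relI A.names s(z i, z (i + 1)) X))
    (hfst : z 0 ∉ A.names) (hlst : z (n - 1) ∉ A.names) :
    ∃ a, HasAtomS Γ (z 0) a ∧ HasAtomS Γ (z (n - 1)) (bar a) := by
  have hd' : Disjoint (negF bar A).names (snames Γ) := by rwa [names_negF]
  have hAΓ := hΓ.insert hA hd
  have hNΓ := hΓ.insert (sharingFree_negF bar hA) hd'
  obtain ⟨Y, hY, -⟩ := (hpath 0 hn).1 Even.zero
  obtain ⟨a, ha₀, ha₁⟩ := hG.exists_of_rel hbar hY
  have step : ∀ i, i + 1 < n → (Even i → HasAtomS (insert A Γ) (z (i + 1)) (bar a)) ∧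
      (¬ Even i → HasAtomS (insert (negF bar A) Γ) (z (i + 1)) (bar a)) := by
    intro i
    induction i with
    | zero => exact fun _ => ⟨fun _ => ha₁, fun h => (h Even.zero).elim⟩
    | succ i ih =>
      intro hi
      have hmem := hint (i + 1) i.succ_pos hi
      obtain ⟨ihe, iho⟩ := ih (Nat.lt_of_succ_lt hi)
      refine ⟨fun he => ?_, fun ho => ?_⟩
      · obtain ⟨Y, hY, -⟩ := (hpath (i + 1) hi).1 he
        have h := hasAtomS_insert_negF (bar := bar) hd' (by rwa [names_negF])
          (iho (Nat.even_add_one.1 he))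
        rw [negF_negF hbar, hbar] at h
        exact hG.hasAtomS_of_rel hbar hAΓ hY h
      · obtain ⟨Y, hY, -⟩ := (hpath (i + 1) hi).2 ho
        have h := hasAtomS_insert_negF (bar := bar) hd hmem
          (ihe (not_not.1 (mt Nat.even_add_one.2 ho)))
        rw [hbar] at h
        exact hH.hasAtomS_of_rel hbar hNΓ hY h
  obtain ⟨m, rfl⟩ : ∃ m, n = m + 2 := ⟨n - 2, by omega⟩
  refine ⟨a, hasAtomS_of_insert hfst ha₀, ?_⟩
  by_cases hm : Even m
  · exact hasAtomS_of_insert hlst ((step m (by omega)).1 hm)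
  · exact hasAtomS_of_insert (by rwa [names_negF]) ((step m (by omega)).2 hm)

theorem EdgesDual.comp {bar : α → α} (hbar : Function.Involutive bar)
    {G H : BLGraph} {Γ : Finset (NForm α)} {A : NForm α} (hΓ : SFSet Γ) (hA : A.sharingFree)
    (hd : Disjoint A.names (snames Γ)) (hG : EdgesDual bar G (insert A Γ))
    (hH : EdgesDual bar H (insert (negF bar A) Γ)) : EdgesDual bar (G.comp H A.names) Γ := by
  rintro e X ⟨n, z, ⟨hn, -, hint, hpath⟩, hfst, hlst, rfl⟩
  rcases hpath with hpath | hpath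
  · obtain ⟨a, h⟩ := hG.alternating_path hbar hΓ hA hd hH hn hint hpath hfst hlst
    exact ⟨_, _, a, rfl, h⟩
  · rw [← names_negF bar A] at hd hint hpath hfst hlst
    obtain ⟨a, h⟩ := hH.alternating_path hbar hΓ (sharingFree_negF bar hA) hd
      (by rwa [negF_negF hbar]) hn hint hpath hfst hlst
    exact ⟨_, _, a, rfl, h⟩

theorem WF.edgesDual {bar : α → α} (hbar : Function.Involutive bar) {P : Deriv α}
    (hP : WF bar P) : EdgesDual bar (blaxg P) (concl P) := by
  induction P with
  | ax Γ A C =>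
    rintro e X ⟨Y, -, he, -⟩
    obtain ⟨x, y, a, rfl, hx, hy⟩ := blid_rel hbar hP.1 he
    exact ⟨x, y, a, rfl, ⟨A, by simp [concl], hx⟩, ⟨C, by simp [concl], hy⟩⟩
  | cut A P Q ihP ihQ =>
    obtain ⟨wP, wQ, Γ, hA, -, hP, hQ, sA, hΓ, hd⟩ := hP
    rw [concl_cut hA hP]
    exact EdgesDual.comp hbar hΓ sA hd (hP ▸ ihP wP) (hQ ▸ ihQ wQ)
  | sup P Q ihP ihQ =>
    obtain ⟨wP, wQ, hPQ⟩ := hP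
    exact (ihP wP).union (hPQ ▸ ihQ wQ)
  | orI A B P ihP =>
    obtain ⟨wP, Γ, hA, hB, hAB, hP, -⟩ := hP
    rw [concl_orI hA hB hAB hP]
    refine (ihP wP).mono fun x a h => ?_
    rw [hP, hasAtomS_insert, hasAtomS_insert, ← or_assoc] at h
    exact hasAtomS_insert.2 h
  | andI A B P Q ihP ihQ =>
    obtain ⟨wP, wQ, Γ, hA, -, hP, hQ, -⟩ := hP
    rw [concl_andI hA hP]
    refine ((ihP wP).mono fun x a h => ?_).union ((ihQ wQ).mono fun x a h => ?_)
    · rw [hP, hasAtomS_insert] at h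
      exact hasAtomS_insert.2 (h.imp_left .inl)
    · rw [hQ, hasAtomS_insert] at h
      exact hasAtomS_insert.2 (h.imp_left .inr)

end GS4

/-- all edges of the branch-labeled axiom graph of a derivation
link dual atom occurrences of its conclusion. -/
theorem GS4.edges_join_dual_atoms {α : Type} (bar : α → α)
    (hbar : Function.Involutive bar) (hfix : ∀ a, bar a ≠ a)
    (P : GS4.Deriv α) (hP : GS4.WF bar P) :
    ∀ x y : ℕ, s(x, y) ∈ (GS4.blaxg P).Edges →
      ∀ a b : α, GS4.HasAtomS (GS4.concl P) x a →
        GS4.HasAtomS (GS4.concl P) y b → a = bar b := by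
  intro x y ⟨X, he⟩ a b ha hb
  obtain ⟨c, hx, hy⟩ := (hP.edgesDual hbar).exists_of_rel hbar he
  rw [ha.unique hP.sfset_concl hx, hb.unique hP.sfset_concl hy, hbar]
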